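/- Let U ⊆ ℝ² be open, let f₁, f₂, θ₂, Ψ : U → ℝ be smooth with f₁, f₂ nowhere zero, and suppose θ₁ ≡ 0 on U (the canal-surface case). Set ξᵢ(g) = (1/fᵢ)∂ᵢg, b = 0 and c = ξ₁(θ₂) (the values of b = -θ₁θ₂ + ξ₂(θ₁) and c = θ₁θ₂ + ξ₁(θ₂) when θ₁ ≡ 0), and assume the structural equations (E1) ∂₂f₁ + (1/2)f₁f₂θ₂ = 0, (E2) ∂₁f₂ = 0, (E3) f₁∂₂Ψ - f₂∂₁c - f₁f₂·θ₂(Ψ+2) = 0, (E4) f₂∂₁Ψ = 0 hold on U. Then at every point p ∈ U where ξ₁(θ₂)(p) ≠ 0, one has Ψ(p) = -2 - ξ₁(ξ₁(ξ₁(θ₂)))(p) / ξ₁(θ₂)(p). -/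

import Mathlib

open scoped Topology

/-- Partial derivative in the first coordinate. -/
noncomputable def pd1 (g : ℝ × ℝ → ℝ) (p : ℝ × ℝ) : ℝ := fderiv ℝ g p (1, 0)

/-- Partial derivative in the second coordinate. -/
noncomputable def pd2 (g : ℝ × ℝ → ℝ) (p : ℝ × ℝ) : ℝ := fderiv ℝ g p (0, 1)

/-- The first-order differential operator ξ₁(g) = (1/f₁)∂₁g. -/
noncomputable def xi1 (f₁ g : ℝ × ℝ → ℝ) : ℝ × ℝ → ℝ := fun p => (1 / f₁ p) * pd1 g p

/-- The first-order differential operator ξ₂(g) = (1/f₂)∂₂g. -/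
noncomputable def xi2 (f₂ g : ℝ × ℝ → ℝ) : ℝ × ℝ → ℝ := fun p => (1 / f₂ p) * pd2 g p

/-!
Dividing (E3) by `f₁ f₂` gives `ξ₁(c) = ξ₂(Ψ) - θ₂ (Ψ + 2)` with `c = ξ₁(θ₂)`. Now apply `ξ₁`. By
(E4) we have `∂₁Ψ = 0`, hence `∂₁∂₂Ψ = 0` since mixed partials commute, and `∂₁f₂ = 0` by (E2).
Thus `ξ₁(ξ₂(Ψ)) = 0` and only `ξ₁³(θ₂) = -(Ψ + 2) ξ₁(θ₂)` remains.
-/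

section SecondDerivative

variable {𝕜 E F : Type*} [NontriviallyNormedField 𝕜] [NormedAddCommGroup E] [NormedSpace 𝕜 E]
  [NormedAddCommGroup F] [NormedSpace 𝕜 F] {g : E → F} {p : E}

theorem differentiableAt_fderiv_of_contDiffAt_two (hg : ContDiffAt 𝕜 2 g p) :
    DifferentiableAt 𝕜 (fderiv 𝕜 g) p :=
  (hg.fderiv_right (m := 1) (by norm_num)).differentiableAt one_ne_zero

theorem fderiv_fderiv_apply (hg : DifferentiableAt 𝕜 (fderiv 𝕜 g) p) (v w : E) :
    fderiv 𝕜 (fun q => fderiv 𝕜 g q v) p w = fderiv 𝕜 (fderiv 𝕜 g) p w v := by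
  simp [fderiv_clm_apply hg (differentiableAt_const v)]

theorem fderiv_fderiv_apply_comm (hg : DifferentiableAt 𝕜 (fderiv 𝕜 g) p)
    (hsymm : IsSymmSndFDerivAt 𝕜 g p) (v w : E) :
    fderiv 𝕜 (fun q => fderiv 𝕜 g q v) p w = fderiv 𝕜 (fun q => fderiv 𝕜 g q w) p v := by
  rw [fderiv_fderiv_apply hg, fderiv_fderiv_apply hg, hsymm.eq]

end SecondDerivative

theorem hasFDerivAt_one_div {𝕜 E : Type*} [NontriviallyNormedField 𝕜] [NormedAddCommGroup E]
    [NormedSpace 𝕜 E] {f : E → 𝕜} {p : E} (hf : DifferentiableAt 𝕜 f p) (hf0 : f p ≠ 0) :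
    HasFDerivAt (fun q => 1 / f q) (-(f p ^ 2)⁻¹ • fderiv 𝕜 f p) p := by
  simp only [one_div]
  exact (hasDerivAt_inv hf0).comp_hasFDerivAt p hf.hasFDerivAt

section PartialDerivatives

variable {f g h : ℝ × ℝ → ℝ} {p : ℝ × ℝ}

theorem differentiableAt_pd2 (hg : ContDiffAt ℝ 2 g p) : DifferentiableAt ℝ (pd2 g) p :=
  (differentiableAt_fderiv_of_contDiffAt_two hg).clm_apply (differentiableAt_const _)

theorem pd1_pd2_comm (hg : ContDiffAt ℝ 2 g p) : pd1 (pd2 g) p = pd2 (pd1 g) p :=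
  fderiv_fderiv_apply_comm (differentiableAt_fderiv_of_contDiffAt_two hg)
    (hg.isSymmSndFDerivAt (by simp)) _ _

theorem pd1_pd2_eq_zero (hg : ContDiffAt ℝ 2 g p) (hg₁ : pd1 g =ᶠ[𝓝 p] 0) :
    pd1 (pd2 g) p = 0 := by
  rw [pd1_pd2_comm hg, pd2, hg₁.fderiv_eq]
  simp

theorem pd1_add_const (c : ℝ) : pd1 (fun q => g q + c) p = pd1 g p := by
  simp only [pd1, fderiv_add_const]

theorem pd1_mul (hg : DifferentiableAt ℝ g p) (hh : DifferentiableAt ℝ h p) :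
    pd1 (fun q => g q * h q) p = g p * pd1 h p + h p * pd1 g p := by
  simp [pd1, fderiv_fun_mul hg hh]

theorem pd1_one_div (hg : DifferentiableAt ℝ g p) (hg0 : g p ≠ 0) :
    pd1 (fun q => 1 / g q) p = -(g p ^ 2)⁻¹ * pd1 g p := by
  rw [pd1, (hasFDerivAt_one_div hg hg0).fderiv]
  rfl

theorem differentiableAt_xi2 (hf : DifferentiableAt ℝ f p) (hf0 : f p ≠ 0)
    (hg : ContDiffAt ℝ 2 g p) : DifferentiableAt ℝ (xi2 f g) p :=
  (hasFDerivAt_one_div hf hf0).differentiableAt.fun_mul (differentiableAt_pd2 hg)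

theorem pd1_xi2_eq_zero (hf : DifferentiableAt ℝ f p) (hf0 : f p ≠ 0) (hf₁ : pd1 f p = 0)
    (hg : ContDiffAt ℝ 2 g p) (hg₁ : pd1 g =ᶠ[𝓝 p] 0) : pd1 (xi2 f g) p = 0 := by
  calc pd1 (xi2 f g) p
      = 1 / f p * pd1 (pd2 g) p + pd2 g p * pd1 (fun q => 1 / f q) p :=
        pd1_mul (hasFDerivAt_one_div hf hf0).differentiableAt (differentiableAt_pd2 hg)
    _ = 0 := by
      rw [pd1_pd2_eq_zero hg hg₁, pd1_one_div hf hf0, hf₁]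
      ring

theorem xi1_congr (hgh : g =ᶠ[𝓝 p] h) : xi1 f g p = xi1 f h p := by
  simp only [xi1, pd1, hgh.fderiv_eq]

theorem xi1_sub (hg : DifferentiableAt ℝ g p) (hh : DifferentiableAt ℝ h p) :
    xi1 f (fun q => g q - h q) p = xi1 f g p - xi1 f h p := by
  simp [xi1, pd1, fderiv_fun_sub hg hh, mul_sub]

theorem xi1_mul_of_pd1_eq_zero (hg : DifferentiableAt ℝ g p) (hh : DifferentiableAt ℝ h p)
    (hh₁ : pd1 h p = 0) : xi1 f (fun q => g q * h q) p = h p * xi1 f g p := by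
  rw [xi1, pd1_mul hg hh, hh₁, xi1]
  ring

end PartialDerivatives

section CanalSurface

variable {f₁ f₂ θ₂ c Ψ : ℝ × ℝ → ℝ} {p : ℝ × ℝ}

theorem xi1_eq_xi2_sub (hf₁0 : f₁ p ≠ 0) (hf₂0 : f₂ p ≠ 0)
    (hE3 : f₁ p * pd2 Ψ p - f₂ p * pd1 c p - f₁ p * f₂ p * (θ₂ p * (Ψ p + 2)) = 0) :
    xi1 f₁ c p = xi2 f₂ Ψ p - θ₂ p * (Ψ p + 2) := by
  rw [xi1, xi2]
  field_simp
  linear_combination -hE3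

theorem xi1_xi2_sub (hf₂ : DifferentiableAt ℝ f₂ p) (hf₂0 : f₂ p ≠ 0) (hf₂₁ : pd1 f₂ p = 0)
    (hθ₂ : DifferentiableAt ℝ θ₂ p) (hΨ : ContDiffAt ℝ 2 Ψ p) (hΨ₁ : pd1 Ψ =ᶠ[𝓝 p] 0) :
    xi1 f₁ (fun q => xi2 f₂ Ψ q - θ₂ q * (Ψ q + 2)) p = -(Ψ p + 2) * xi1 f₁ θ₂ p := by
  have hΨ2 : DifferentiableAt ℝ (fun q => Ψ q + 2) p :=
    (hΨ.differentiableAt two_ne_zero).add_const 2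
  have hΨ2₁ : pd1 (fun q => Ψ q + 2) p = 0 := (pd1_add_const 2).trans hΨ₁.eq_of_nhds
  have hξ₂ : xi1 f₁ (xi2 f₂ Ψ) p = 0 := by
    rw [xi1, pd1_xi2_eq_zero hf₂ hf₂0 hf₂₁ hΨ hΨ₁, mul_zero]
  rw [xi1_sub (differentiableAt_xi2 hf₂ hf₂0 hΨ) (hθ₂.fun_mul hΨ2), hξ₂,
    xi1_mul_of_pd1_eq_zero hθ₂ hΨ2 hΨ2₁]
  ring

theorem psi_on_canal_surface_general {U : Set (ℝ × ℝ)} (hU : IsOpen U)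
    (hf₁ : DifferentiableOn ℝ f₁ U) (hf₂ : DifferentiableOn ℝ f₂ U)
    (hθ₂ : ContDiffOn ℝ 2 θ₂ U) (hΨ : ContDiffOn ℝ 2 Ψ U)
    (hf₁0 : ∀ p ∈ U, f₁ p ≠ 0) (hf₂0 : ∀ p ∈ U, f₂ p ≠ 0)
    (hE2 : ∀ p ∈ U, pd1 f₂ p = 0)
    (hE3 : ∀ p ∈ U, f₁ p * pd2 Ψ p - f₂ p * pd1 (xi1 f₁ θ₂) p
      - f₁ p * f₂ p * (θ₂ p * (Ψ p + 2)) = 0)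
    (hE4 : ∀ p ∈ U, f₂ p * pd1 Ψ p = 0) :
    ∀ p ∈ U, xi1 f₁ θ₂ p ≠ 0 →
      Ψ p = -2 - xi1 f₁ (xi1 f₁ (xi1 f₁ θ₂)) p / xi1 f₁ θ₂ p := by
  intro p hp hc
  have hUp : U ∈ 𝓝 p := hU.mem_nhds hp
  have hΨ₁ : pd1 Ψ =ᶠ[𝓝 p] 0 := Filter.eventually_of_mem hUp fun q hq =>
    (mul_eq_zero.mp (hE4 q hq)).resolve_left (hf₂0 q hq)
  have hξξ : xi1 f₁ (xi1 f₁ θ₂) =ᶠ[𝓝 p] fun q => xi2 f₂ Ψ q - θ₂ q * (Ψ q + 2) :=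
    Filter.eventually_of_mem hUp fun q hq => xi1_eq_xi2_sub (hf₁0 q hq) (hf₂0 q hq) (hE3 q hq)
  have hξξξ : xi1 f₁ (xi1 f₁ (xi1 f₁ θ₂)) p = -(Ψ p + 2) * xi1 f₁ θ₂ p :=
    (xi1_congr hξξ).trans <|
      xi1_xi2_sub (hf₂.differentiableAt hUp) (hf₂0 p hp) (hE2 p hp)
        ((hθ₂.contDiffAt hUp).differentiableAt two_ne_zero) (hΨ.contDiffAt hUp) hΨ₁
  rw [hξξξ, mul_div_cancel_right₀ _ hc]
  ring

end CanalSurface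

/-- On a canal surface (θ₁ ≡ 0), the structural equations imply
Ψ = -2 - ξ₁³(θ₂)/ξ₁(θ₂) at every point where ξ₁(θ₂) ≠ 0. -/
theorem psi_on_canal_surface
    (U : Set (ℝ × ℝ)) (hU : IsOpen U)
    (f₁ f₂ θ₂ Ψ : ℝ × ℝ → ℝ)
    (hf₁ : ContDiffOn ℝ (⊤ : ℕ∞) f₁ U) (hf₂ : ContDiffOn ℝ (⊤ : ℕ∞) f₂ U)
    (hθ₂ : ContDiffOn ℝ (⊤ : ℕ∞) θ₂ U) (hΨ : ContDiffOn ℝ (⊤ : ℕ∞) Ψ U)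
    (hf₁0 : ∀ p ∈ U, f₁ p ≠ 0) (hf₂0 : ∀ p ∈ U, f₂ p ≠ 0)
    (hE1 : ∀ p ∈ U, pd2 f₁ p + (1 / 2) * f₁ p * f₂ p * θ₂ p = 0)
    (hE2 : ∀ p ∈ U, pd1 f₂ p = 0)
    (hE3 : ∀ p ∈ U, f₁ p * pd2 Ψ p - f₂ p * pd1 (xi1 f₁ θ₂) p
      - f₁ p * f₂ p * (θ₂ p * (Ψ p + 2)) = 0)
    (hE4 : ∀ p ∈ U, f₂ p * pd1 Ψ p = 0) :
    ∀ p ∈ U, xi1 f₁ θ₂ p ≠ 0 →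
      Ψ p = -2 - xi1 f₁ (xi1 f₁ (xi1 f₁ θ₂)) p / xi1 f₁ θ₂ p :=
  psi_on_canal_surface_general hU (hf₁.differentiableOn (by simp)) (hf₂.differentiableOn (by simp))
    (hθ₂.of_le (WithTop.coe_le_coe.mpr le_top)) (hΨ.of_le (WithTop.coe_le_coe.mpr le_top))
    hf₁0 hf₂0 hE2 hE3 hE4
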